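/- arXiv:2503.22286 — 12 statements merged into one kernel-verified Lean document; each statement's English description precedes it below -/
import Mathlib

section
/- Let n ≥ 1 and let M be an n×n real symmetric positive definite matrix with spectral condition number κ = κ₂(M). Then (κ^{1/2} + κ^{-1/2})² ≤ 4·K(M); in particular κ₂(M) ≤ 4·K(M). -/
open Matrix

/-- Kaporin's condition number. -/
noncomputable def Kap {n : ℕ} (M : Matrix (Fin n) (Fin n) ℝ) : ℝ :=
  (M.trace / n) ^ n / M.det

/-- The spectral condition number: ratio of the largest to the smallest eigenvalue
(for a real symmetric positive definite matrix, the spectrum is the set of its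
eigenvalues). -/
noncomputable def kappa2 {n : ℕ} (M : Matrix (Fin n) (Fin n) ℝ) : ℝ :=
  sSup (spectrum ℝ M) / sInf (spectrum ℝ M)

/-- AM-GM in power form. -/
theorem amgm_pow_aux (n : ℕ) (hn : 1 ≤ n) (f : Fin n → ℝ) (hf : ∀ i, 0 < f i) :
    ∏ i, f i ≤ ((∑ i, f i) / n) ^ n := by
  have hn0 : n ≠ 0 := by omega
  have hP : 0 ≤ ∏ i, f i := Finset.prod_nonneg fun i _ => (hf i).le
  have h := Real.geom_mean_le_arith_mean Finset.univ (fun _ : Fin n => (1 : ℝ)) f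
    (fun _ _ => zero_le_one) (by simpa using (by omega : 0 < n)) (fun i _ => (hf i).le)
  simp only [Real.rpow_one, one_mul, Finset.sum_const, Finset.card_univ, Fintype.card_fin,
    nsmul_eq_mul, mul_one] at h
  calc ∏ i, f i = ((∏ i, f i) ^ ((n : ℝ)⁻¹)) ^ n := (Real.rpow_inv_natCast_pow hP hn0).symm
    _ ≤ _ := pow_le_pow_left₀ (Real.rpow_nonneg hP _) h n

theorem amgm_two_aux (n : ℕ) (hn : 1 ≤ n) (l : Fin n → ℝ) (hl : ∀ i, 0 < l i) (i j : Fin n) :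
    (l i + l j) ^ 2 / (l i * l j) ≤ 4 * (((∑ k, l k) / n) ^ n / ∏ k, l k) := by
  have hP : 0 < ∏ k, l k := Finset.prod_pos fun k _ => hl k
  have hi := hl i
  have hj := hl j
  by_cases hij : i = j
  · subst hij
    have h := amgm_pow_aux n hn l hl
    have h1 : 1 ≤ ((∑ k, l k) / n) ^ n / ∏ k, l k := by rwa [one_le_div hP]
    have h2 : (l i + l i) ^ 2 / (l i * l i) = 4 := by field_simp; ring
    linarith
  · let f : Fin n → ℝ := fun k => if k = i ∨ k = j then (l i + l j) / 2 else l k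
    have hf : ∀ k, 0 < f k := by
      intro k
      simp only [f]
      split_ifs
      · positivity
      · exact hl k
    have h := amgm_pow_aux n hn f hf
    have hjm : j ∈ Finset.univ.erase i := by simp [Ne.symm hij]
    have hr : ∀ k ∈ (Finset.univ.erase i).erase j, f k = l k := by
      intro k hk
      simp only [Finset.mem_erase] at hk
      simp [f, hk.1, hk.2.1]
    have hfi : f i = (l i + l j) / 2 := by simp [f]
    have hfj : f j = (l i + l j) / 2 := by simp [f]
    have hs : ∑ k, f k = ∑ k, l k := by
      rw [← Finset.add_sum_erase _ f (Finset.mem_univ i), ← Finset.add_sum_erase _ f hjm,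
        ← Finset.add_sum_erase _ l (Finset.mem_univ i), ← Finset.add_sum_erase _ l hjm,
        Finset.sum_congr rfl hr, hfi, hfj]
      ring
    have hp : (∏ k, f k) * (l i * l j) = ((l i + l j) / 2) ^ 2 * ∏ k, l k := by
      rw [← Finset.mul_prod_erase _ f (Finset.mem_univ i), ← Finset.mul_prod_erase _ f hjm,
        ← Finset.mul_prod_erase _ l (Finset.mem_univ i), ← Finset.mul_prod_erase _ l hjm,
        Finset.prod_congr rfl hr, hfi, hfj]
      ring
    rw [hs] at h
    rw [← mul_div_assoc, div_le_div_iff₀ (by positivity) hP]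
    have := mul_le_mul_of_nonneg_right h (by positivity : 0 ≤ l i * l j)
    nlinarith

/-- `(κ^{1/2} + κ^{-1/2})² ≤ 4·K(M)`, in particular `κ₂(M) ≤ 4·K(M)`. -/
theorem stmt_3 (n : ℕ) (hn : 1 ≤ n) (M : Matrix (Fin n) (Fin n) ℝ) (hM : M.PosDef)
    (κ : ℝ) (hκ : κ = kappa2 M) :
    (Real.sqrt κ + (Real.sqrt κ)⁻¹) ^ 2 ≤ 4 * Kap M ∧ kappa2 M ≤ 4 * Kap M := by
  have hne : Nonempty (Fin n) := ⟨⟨0, by omega⟩⟩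
  set l := hM.isHermitian.eigenvalues with hl_def
  have hl : ∀ i, 0 < l i := hM.eigenvalues_pos
  have hspec : spectrum ℝ M = Set.range l := hM.isHermitian.spectrum_real_eq_range_eigenvalues
  have hfin : (Set.range l).Finite := Set.finite_range l
  have hnon : (Set.range l).Nonempty := Set.range_nonempty l
  obtain ⟨i, hi⟩ := hnon.csSup_mem hfin
  obtain ⟨j, hj⟩ := hnon.csInf_mem hfin
  have hk : kappa2 M = l i / l j := by rw [kappa2, hspec, ← hi, ← hj]
  have hK : Kap M = ((∑ k, l k) / n) ^ n / ∏ k, l k := by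
    rw [Kap, hM.isHermitian.trace_eq_sum_eigenvalues, hM.isHermitian.det_eq_prod_eigenvalues]
    simp [hl_def]
  have hmain := amgm_two_aux n hn l hl i j
  have hi0 := hl i
  have hj0 := hl j
  have hκ' : κ = l i / l j := hκ.trans hk
  have hκ0 : 0 < κ := by rw [hκ']; positivity
  have hs : Real.sqrt κ ^ 2 = κ := Real.sq_sqrt hκ0.le
  have hs0 : 0 < Real.sqrt κ := Real.sqrt_pos.2 hκ0
  have e1 : (Real.sqrt κ + (Real.sqrt κ)⁻¹) ^ 2 = κ + 2 + κ⁻¹ := by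
    rw [add_sq, inv_pow, hs, mul_assoc, mul_inv_cancel₀ hs0.ne']
    ring
  have e2 : (l i + l j) ^ 2 / (l i * l j) = κ + 2 + κ⁻¹ := by
    rw [hκ']
    field_simp
    ring
  have hinv : 0 < κ⁻¹ := inv_pos.2 hκ0
  rw [hK, e1, ← hκ]
  rw [e2] at hmain
  exact ⟨hmain, by linarith⟩
end

section
/- Let n ≥ 1, let (u_1,…,u_n) and (v_1,…,v_n) be orthonormal bases of ℝⁿ, let ξ_1,…,ξ_n > 0 and ω_1,…,ω_n > 0, and set A = Σ_i ξ_i·u_i·u_iᵀ and P = Σ_j ω_j·v_j·v_jᵀ. Then D_LD(A,P) = Σ_{i=1}^n Σ_{j=1}^n ⟨u_i, v_j⟩² · ( ξ_i/ω_j − ln(ξ_i/ω_j) − 1 ). -/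
open Matrix

/-- Bregman log determinant divergence. -/
noncomputable def DLD {n : ℕ} (A P : Matrix (Fin n) (Fin n) ℝ) : ℝ :=
  (A * P⁻¹).trace - Real.log (A * P⁻¹).det - n

theorem aux_spectral {n : ℕ} (u : Fin n → (Fin n → ℝ)) (ξ : Fin n → ℝ) :
    (∑ i, ξ i • vecMulVec (u i) (u i)) =
      (Matrix.of u)ᵀ * diagonal ξ * Matrix.of u := by
  ext a b
  rw [Matrix.mul_apply]
  simp only [Matrix.sum_apply, Matrix.smul_apply, vecMulVec_apply, mul_diagonal,
    transpose_apply, of_apply, smul_eq_mul]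
  exact Finset.sum_congr rfl fun i _ => by ring

theorem aux_orth {n : ℕ} (u : Fin n → (Fin n → ℝ))
    (hu : ∀ i j, u i ⬝ᵥ u j = if i = j then (1 : ℝ) else 0) :
    Matrix.of u * (Matrix.of u)ᵀ = 1 := by
  ext i j
  rw [Matrix.mul_apply, Matrix.one_apply, ← hu]
  rfl

theorem stmt_5 (n : ℕ) (hn : 1 ≤ n) (u v : Fin n → (Fin n → ℝ)) (ξ ω : Fin n → ℝ)
    (hu : ∀ i j, u i ⬝ᵥ u j = if i = j then (1 : ℝ) else 0)
    (hv : ∀ i j, v i ⬝ᵥ v j = if i = j then (1 : ℝ) else 0)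
    (hξ : ∀ i, 0 < ξ i) (hω : ∀ j, 0 < ω j) :
    DLD (∑ i, ξ i • vecMulVec (u i) (u i)) (∑ j, ω j • vecMulVec (v j) (v j)) =
      ∑ i, ∑ j, (u i ⬝ᵥ v j) ^ 2 * (ξ i / ω j - Real.log (ξ i / ω j) - 1) := by
  have hU := aux_orth u hu
  have hV := aux_orth v hv
  rw [aux_spectral u ξ, aux_spectral v ω]
  have hWdef : ∀ i j, (Matrix.of u * (Matrix.of v)ᵀ) i j = u i ⬝ᵥ v j := fun i j => rfl
  generalize Matrix.of u = U at *
  generalize Matrix.of v = V at *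
  have hU' : Uᵀ * U = 1 := mul_eq_one_comm.mp hU
  have hV' : Vᵀ * V = 1 := mul_eq_one_comm.mp hV
  have hinv : (Vᵀ * diagonal ω * V)⁻¹ = Vᵀ * diagonal (fun j => (ω j)⁻¹) * V := by
    apply Matrix.inv_eq_right_inv
    have hd : diagonal ω * diagonal (fun j => (ω j)⁻¹) = 1 := by
      rw [diagonal_mul_diagonal, ← diagonal_one]
      congr 1
      funext j
      exact mul_inv_cancel₀ (hω j).ne'
    calc Vᵀ * diagonal ω * V * (Vᵀ * diagonal (fun j => (ω j)⁻¹) * V)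
        = Vᵀ * (diagonal ω * (V * Vᵀ) * diagonal (fun j => (ω j)⁻¹)) * V := by
          simp only [Matrix.mul_assoc]
      _ = 1 := by rw [hV, Matrix.mul_one, hd, Matrix.mul_one, hV']
  have hdetU : U.det * U.det = 1 := by
    have := congrArg Matrix.det hU
    simpa using this
  have hdetV : V.det * V.det = 1 := by
    have := congrArg Matrix.det hV
    simpa using this
  have hdet : (Uᵀ * diagonal ξ * U * (Vᵀ * diagonal (fun j => (ω j)⁻¹) * V)).det
      = (∏ i, ξ i) * ∏ j, (ω j)⁻¹ := by
    simp only [det_mul, det_transpose, det_diagonal]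
    linear_combination (∏ i, ξ i) * (∏ j, (ω j)⁻¹) * (V.det * V.det) * hdetU
      + (∏ i, ξ i) * (∏ j, (ω j)⁻¹) * hdetV
  have hlog : Real.log ((∏ i, ξ i) * ∏ j, (ω j)⁻¹)
      = ∑ i, Real.log (ξ i) - ∑ j, Real.log (ω j) := by
    rw [Real.log_mul (Finset.prod_ne_zero_iff.mpr fun i _ => (hξ i).ne')
      (Finset.prod_ne_zero_iff.mpr fun i _ => inv_ne_zero (hω i).ne'),
      Real.log_prod (fun i _ => (hξ i).ne'),
      Real.log_prod (fun i _ => inv_ne_zero (hω i).ne')]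
    simp [Real.log_inv, sub_eq_add_neg]
  have htr : (Uᵀ * diagonal ξ * U * (Vᵀ * diagonal (fun j => (ω j)⁻¹) * V)).trace
      = ∑ i, ∑ j, (u i ⬝ᵥ v j) ^ 2 * (ξ i / ω j) := by
    have h1 : (Uᵀ * diagonal ξ * U * (Vᵀ * diagonal (fun j => (ω j)⁻¹) * V)).trace
        = (diagonal ξ * (U * Vᵀ) * (diagonal (fun j => (ω j)⁻¹) * (U * Vᵀ)ᵀ)).trace := by
      rw [Matrix.mul_assoc Uᵀ, Matrix.mul_assoc Uᵀ, Matrix.trace_mul_comm]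
      simp only [Matrix.mul_assoc, transpose_mul, transpose_transpose]
    rw [h1, Matrix.trace]
    refine Finset.sum_congr rfl fun i _ => ?_
    rw [diag_apply, Matrix.mul_apply]
    refine Finset.sum_congr rfl fun j _ => ?_
    rw [diagonal_mul, diagonal_mul, transpose_apply, hWdef]
    ring
  have hrow : ∀ i, ∑ j, (u i ⬝ᵥ v j) ^ 2 = 1 := by
    intro i
    have h : (U * Vᵀ) * (U * Vᵀ)ᵀ = 1 := by
      calc (U * Vᵀ) * (U * Vᵀ)ᵀ = U * (Vᵀ * V) * Uᵀ := by
            simp only [Matrix.mul_assoc, transpose_mul, transpose_transpose]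
        _ = 1 := by rw [hV', Matrix.mul_one, hU]
    have h2 := congrFun (congrFun h i) i
    rw [Matrix.mul_apply, Matrix.one_apply_eq] at h2
    rw [← h2]
    exact Finset.sum_congr rfl fun j _ => by rw [transpose_apply, hWdef]; ring
  have hcol : ∀ j, ∑ i, (u i ⬝ᵥ v j) ^ 2 = 1 := by
    intro j
    have h : (U * Vᵀ)ᵀ * (U * Vᵀ) = 1 := by
      calc (U * Vᵀ)ᵀ * (U * Vᵀ) = V * (Uᵀ * U) * Vᵀ := by
            simp only [Matrix.mul_assoc, transpose_mul, transpose_transpose]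
        _ = 1 := by rw [hU', Matrix.mul_one, hV]
    have h2 := congrFun (congrFun h j) j
    rw [Matrix.mul_apply, Matrix.one_apply_eq] at h2
    rw [← h2]
    exact Finset.sum_congr rfl fun i _ => by rw [transpose_apply, hWdef]; ring
  have e1 : ∑ i, ∑ j, (u i ⬝ᵥ v j) ^ 2 * Real.log (ξ i) = ∑ i, Real.log (ξ i) := by
    refine Finset.sum_congr rfl fun i _ => ?_
    rw [← Finset.sum_mul, hrow, one_mul]
  have e2 : ∑ i, ∑ j, (u i ⬝ᵥ v j) ^ 2 * Real.log (ω j) = ∑ j, Real.log (ω j) := by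
    rw [Finset.sum_comm]
    refine Finset.sum_congr rfl fun j _ => ?_
    rw [← Finset.sum_mul, hcol, one_mul]
  have e3 : ∑ i, ∑ j, (u i ⬝ᵥ v j) ^ 2 = (n : ℝ) := by
    simp [hrow]
  have e4 : ∑ i, ∑ j, (u i ⬝ᵥ v j) ^ 2 * (ξ i / ω j - Real.log (ξ i / ω j) - 1)
      = ∑ i, ∑ j, (u i ⬝ᵥ v j) ^ 2 * (ξ i / ω j)
        - (∑ i, ∑ j, (u i ⬝ᵥ v j) ^ 2 * Real.log (ξ i)
          - ∑ i, ∑ j, (u i ⬝ᵥ v j) ^ 2 * Real.log (ω j))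
        - ∑ i, ∑ j, (u i ⬝ᵥ v j) ^ 2 := by
    simp only [← Finset.sum_sub_distrib]
    refine Finset.sum_congr rfl fun i _ => Finset.sum_congr rfl fun j _ => ?_
    rw [Real.log_div (hξ i).ne' (hω j).ne']
    ring
  rw [DLD, hinv, htr, hdet, hlog, e4, e1, e2, e3]
end

section
/- Let 1 ≤ r < n, let Q be an invertible n×n real matrix, let Ẽ be an n×n real symmetric matrix with I + Ẽ positive definite, and set A = Q·(I+Ẽ)·Qᵀ. Let V be a real n×r matrix with Vᵀ·V = I_r, and let D be a real r×r diagonal matrix with Ẽ·V = V·D. For α > 0 define P_α = Q·( α·(I − V·Vᵀ) + V·(I_r + D)·Vᵀ )·Qᵀ, which is positive definite. Then α* := trace( (I+Ẽ)·(I − V·Vᵀ) ) / (n − r) is positive, and α* is the unique minimiser over α > 0 of the function α ↦ D_LD(A, P_α); that is, D_LD(A, P_α) > D_LD(A, P_{α*}) for every α > 0 with α ≠ α*. -/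
open Matrix

theorem aux_trace_pos {n r : ℕ} (hrn : r < n) (B W : Matrix (Fin n) (Fin n) ℝ) (hB : B.PosDef)
    (hWt : Wᵀ = W) (hWW : W * W = W) (htr : W.trace = (n : ℝ) - r) : 0 < (B * W).trace := by
  have hps : (Wᴴ * B * W).PosSemidef := hB.posSemidef.conjTranspose_mul_mul_same W
  have hc : Wᴴ = W := by rw [conjTranspose_eq_transpose_of_trivial, hWt]
  have e : (B * W).trace = (Wᴴ * B * W).trace := by
    rw [hc, Matrix.mul_assoc, Matrix.trace_mul_comm W (B * W), Matrix.mul_assoc, hWW]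
  rw [e]
  refine lt_of_le_of_ne hps.trace_nonneg (fun h => ?_)
  have hz : Wᴴ * B * W = 0 := (hps.trace_eq_zero_iff).1 h.symm
  have hW0 : W = 0 := by
    apply Matrix.ext_of_mulVec_single
    intro i
    by_contra hne
    rw [Matrix.zero_mulVec] at hne
    have h1 := hB.dotProduct_mulVec_pos hne
    have h2 : star (W *ᵥ Pi.single i 1) ⬝ᵥ (B *ᵥ (W *ᵥ Pi.single i 1))
        = star (Pi.single i (1:ℝ)) ⬝ᵥ ((Wᴴ * B * W) *ᵥ Pi.single i 1) := by
      rw [Matrix.star_mulVec, ← Matrix.dotProduct_mulVec, Matrix.mulVec_mulVec,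
        Matrix.mulVec_mulVec, Matrix.mul_assoc]
    rw [h2, hz] at h1
    simp at h1
  rw [hW0] at htr
  have : (r : ℝ) < n := by exact_mod_cast hrn
  simp at htr
  linarith

theorem aux_det {n r : ℕ} (hrn : r < n) (V : Matrix (Fin n) (Fin r) ℝ) (hV : Vᵀ * V = 1)
    (α : ℝ) (hα : 0 < α) : (α • (1 - V * Vᵀ) + V * Vᵀ).det = α ^ (n - r) := by
  have e : α • (1 - V * Vᵀ) + V * Vᵀ = α • (1 + (((1 - α) / α) • V) * Vᵀ) := by
    rw [Matrix.smul_mul, smul_add, smul_sub, smul_smul, mul_div_cancel₀ _ hα.ne', sub_smul,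
      one_smul]
    abel
  rw [e, Matrix.det_smul, Matrix.det_one_add_mul_comm, Matrix.mul_smul, hV]
  have e2 : (1 : Matrix (Fin r) (Fin r) ℝ) + ((1 - α) / α) • 1 = α⁻¹ • 1 := by
    nth_rewrite 1 [← one_smul ℝ (1 : Matrix (Fin r) (Fin r) ℝ)]
    rw [← add_smul]
    congr 1
    field_simp
    ring
  rw [e2, Matrix.det_smul, Matrix.det_one, mul_one, Fintype.card_fin, Fintype.card_fin]
  rw [pow_sub₀ _ hα.ne' hrn.le, inv_pow]

theorem aux_mul {n r : ℕ} (V : Matrix (Fin n) (Fin r) ℝ) (hV : Vᵀ * V = 1)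
    (a b : ℝ) (S T : Matrix (Fin r) (Fin r) ℝ) :
    (a • (1 - V * Vᵀ) + V * S * Vᵀ) * (b • (1 - V * Vᵀ) + V * T * Vᵀ)
      = (a * b) • (1 - V * Vᵀ) + V * (S * T) * Vᵀ := by
  have hWV : (1 - V * Vᵀ) * V = 0 := by
    rw [Matrix.sub_mul, Matrix.mul_assoc, hV]; simp
  have hVW : Vᵀ * (1 - V * Vᵀ) = 0 := by
    rw [Matrix.mul_sub, ← Matrix.mul_assoc, hV]; simp
  have hWW : (1 - V * Vᵀ) * (1 - V * Vᵀ) = 1 - V * Vᵀ := by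
    rw [Matrix.mul_sub, ← Matrix.mul_assoc, hWV]; simp
  have h1 : (1 - V * Vᵀ) * (V * T * Vᵀ) = 0 := by
    rw [← Matrix.mul_assoc, ← Matrix.mul_assoc, hWV]; simp
  have h2 : V * S * Vᵀ * (1 - V * Vᵀ) = 0 := by
    rw [Matrix.mul_assoc, hVW]; simp
  have h3 : V * S * Vᵀ * (V * T * Vᵀ) = V * (S * T) * Vᵀ := by
    calc _ = V * S * (Vᵀ * V) * T * Vᵀ := by simp only [Matrix.mul_assoc]
      _ = _ := by rw [hV]; simp only [Matrix.mul_assoc, Matrix.one_mul]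
  rw [Matrix.add_mul, Matrix.mul_add, Matrix.mul_add, Matrix.smul_mul, Matrix.smul_mul,
    Matrix.mul_smul, Matrix.mul_smul, hWW, h1, h2, h3, smul_smul]
  simp

/-- the scaling `α* = trace((I+Ẽ)(I−VVᵀ))/(n−r)` is positive and is
the unique minimiser over `α > 0` of `α ↦ D_LD(A, P_α)`. -/
theorem stmt_9 (n r : ℕ) (hr : 1 ≤ r) (hrn : r < n)
    (Q E : Matrix (Fin n) (Fin n) ℝ) (hQ : IsUnit Q.det)
    (hEsymm : E.IsSymm) (hEpd : (1 + E).PosDef)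
    (A : Matrix (Fin n) (Fin n) ℝ) (hA : A = Q * (1 + E) * Qᵀ)
    (V : Matrix (Fin n) (Fin r) ℝ) (hV : Vᵀ * V = 1)
    (d : Fin r → ℝ) (hVD : E * V = V * diagonal d)
    (P : ℝ → Matrix (Fin n) (Fin n) ℝ)
    (hP : ∀ α : ℝ, P α = Q * (α • (1 - V * Vᵀ) + V * (1 + diagonal d) * Vᵀ) * Qᵀ)
    (αstar : ℝ) (hαstar : αstar = ((1 + E) * (1 - V * Vᵀ)).trace / ((n : ℝ) - r)) :
    0 < αstar ∧
    ∀ α : ℝ, 0 < α → α ≠ αstar → DLD A (P αstar) < DLD A (P α) := by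
  have hnr : (0 : ℝ) < (n : ℝ) - r := by
    have : (r : ℝ) < n := by exact_mod_cast hrn
    linarith
  have hWV : (1 - V * Vᵀ) * V = 0 := by
    rw [Matrix.sub_mul, Matrix.mul_assoc, hV]; simp
  have hWW : (1 - V * Vᵀ) * (1 - V * Vᵀ) = 1 - V * Vᵀ := by
    rw [Matrix.mul_sub, ← Matrix.mul_assoc, hWV]; simp
  have ht : 0 < ((1 + E) * (1 - V * Vᵀ)).trace := by
    refine aux_trace_pos hrn (1 + E) (1 - V * Vᵀ) hEpd (by simp) hWW ?_
    rw [Matrix.trace_sub, Matrix.trace_mul_comm, hV]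
    simp
  have hpos : 0 < αstar := by rw [hαstar]; exact div_pos ht hnr
  refine ⟨hpos, ?_⟩
  -- positivity of the diagonal entries
  have hinj : Function.Injective V.mulVec := by
    intro x y hxy
    have := congrArg (fun z => Vᵀ *ᵥ z) hxy
    simpa [Matrix.mulVec_mulVec, hV] using this
  have hDpd : (1 + diagonal d).PosDef := by
    have h := hEpd.conjTranspose_mul_mul_same (B := V) hinj
    have e : Vᴴ * (1 + E) * V = 1 + diagonal d := by
      rw [conjTranspose_eq_transpose_of_trivial, Matrix.mul_assoc, Matrix.add_mul, hVD,
        Matrix.one_mul, Matrix.mul_add, hV, ← Matrix.mul_assoc, hV, Matrix.one_mul]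
    rwa [e] at h
  set S : Matrix (Fin r) (Fin r) ℝ := 1 + diagonal d with hS
  have hSu : IsUnit S.det := isUnit_iff_ne_zero.2 hDpd.det_pos.ne'
  have hSS : S * S⁻¹ = 1 := Matrix.mul_nonsing_inv S hSu
  have hMinv : ∀ α : ℝ, 0 < α → (α • (1 - V * Vᵀ) + V * S * Vᵀ) *
      (α⁻¹ • (1 - V * Vᵀ) + V * S⁻¹ * Vᵀ) = 1 := by
    intro α hα
    rw [aux_mul V hV, hSS, mul_inv_cancel₀ hα.ne']
    simp
  have hKdet : (1 • (1 - V * Vᵀ) + V * S * Vᵀ : Matrix (Fin n) (Fin n) ℝ).det ≠ 0 := by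
    intro h
    have := congrArg Matrix.det (hMinv 1 one_pos)
    rw [Matrix.det_mul] at this
    simp only [one_smul] at h this
    rw [h] at this
    simp at this
  have hMdet : ∀ α : ℝ, 0 < α → (α • (1 - V * Vᵀ) + V * S * Vᵀ).det
      = α ^ (n - r) * (1 • (1 - V * Vᵀ) + V * S * Vᵀ : Matrix (Fin n) (Fin n) ℝ).det := by
    intro α hα
    have h := aux_mul V hV α 1 1 S
    rw [mul_one, Matrix.one_mul, Matrix.mul_one] at h
    rw [← h, Matrix.det_mul, aux_det hrn V hV α hα]
    simp only [one_smul]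
  set k := (1 • (1 - V * Vᵀ) + V * S * Vᵀ : Matrix (Fin n) (Fin n) ℝ).det with hk
  have hQQ : Q * Q⁻¹ = 1 := Matrix.mul_nonsing_inv Q hQ
  have hQQ' : Q⁻¹ * Q = 1 := Matrix.nonsing_inv_mul Q hQ
  have hQt : IsUnit Qᵀ.det := by rwa [Matrix.det_transpose]
  have hQQt : Qᵀ * Qᵀ⁻¹ = 1 := Matrix.mul_nonsing_inv Qᵀ hQt
  have key : ∀ α : ℝ, 0 < α → DLD A (P α) = ((1 + E) * (1 - V * Vᵀ)).trace / α
      + ((n : ℝ) - r) * Real.log α + (((1 + E) * (V * S⁻¹ * Vᵀ)).trace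
        - Real.log ((1 + E).det * k⁻¹) - n) := by
    intro α hα
    have hM := Matrix.inv_eq_right_inv (hMinv α hα)
    have hAP : A * (P α)⁻¹
        = Q * ((1 + E) * (α • (1 - V * Vᵀ) + V * S * Vᵀ)⁻¹) * Q⁻¹ := by
      rw [hA, hP, Matrix.mul_inv_rev, Matrix.mul_inv_rev]
      calc _ = Q * (1 + E) * (Qᵀ * Qᵀ⁻¹) * (α • (1 - V * Vᵀ) + V * S * Vᵀ)⁻¹ * Q⁻¹ := by
            simp only [Matrix.mul_assoc]
        _ = _ := by rw [hQQt]; simp only [Matrix.mul_assoc, Matrix.mul_one]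
    have htr : (A * (P α)⁻¹).trace = ((1 + E) * (1 - V * Vᵀ)).trace / α
        + ((1 + E) * (V * S⁻¹ * Vᵀ)).trace := by
      rw [hAP, Matrix.trace_mul_comm, ← Matrix.mul_assoc, hQQ', Matrix.one_mul, hM,
        Matrix.mul_add, Matrix.mul_smul, Matrix.trace_add, Matrix.trace_smul, smul_eq_mul,
        div_eq_inv_mul]
    have hdet : (A * (P α)⁻¹).det = ((1 + E).det * k⁻¹) * (α ^ (n - r))⁻¹ := by
      rw [hAP, Matrix.det_mul, Matrix.det_mul, mul_right_comm, ← Matrix.det_mul, hQQ,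
        Matrix.det_one, one_mul, Matrix.det_mul, Matrix.det_nonsing_inv, Ring.inverse_eq_inv',
        hMdet α hα, mul_inv]
      ring
    have hlog : Real.log (A * (P α)⁻¹).det
        = Real.log ((1 + E).det * k⁻¹) - ((n : ℝ) - r) * Real.log α := by
      rw [hdet, Real.log_mul (mul_ne_zero hEpd.det_pos.ne' (inv_ne_zero hKdet))
        (inv_ne_zero (pow_pos hα _).ne'), Real.log_inv, Real.log_pow, Nat.cast_sub hrn.le]
      ring
    rw [DLD, htr, hlog]
    ring
  intro α hα hne
  rw [key α hα, key αstar hpos]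
  have htt : ((1 + E) * (1 - V * Vᵀ)).trace = ((n : ℝ) - r) * αstar := by
    rw [hαstar]; field_simp
  rw [htt]
  have hx : αstar / α ≠ 1 := by
    intro h
    rw [div_eq_one_iff_eq hα.ne'] at h
    exact hne h.symm
  have hl := Real.log_lt_sub_one_of_pos (div_pos hpos hα) hx
  rw [Real.log_div hpos.ne' hα.ne'] at hl
  have hm := mul_lt_mul_of_pos_left hl hnr
  rw [mul_div_assoc, mul_div_assoc, div_self hpos.ne']
  linarith
end

section
/- Let 1 ≤ r < n, let Q be an invertible n×n real matrix, let Ẽ be an n×n real symmetric matrix with I + Ẽ positive definite, and set A = Q·(I+Ẽ)·Qᵀ and P = Q·(I + V·D·Vᵀ)·Qᵀ, where V is a real n×r matrix with Vᵀ·V = I_r and D is a real r×r diagonal matrix with Ẽ·V = V·D. Then trace( (I+Ẽ)·(I − V·Vᵀ) ) = trace(P⁻¹·A) − r. -/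
open Matrix

/-- `trace((I+Ẽ)(I − VVᵀ)) = trace(P⁻¹·A) − r`. -/
theorem stmt_11 (n r : ℕ) (hr : 1 ≤ r) (hrn : r < n)
    (Q E : Matrix (Fin n) (Fin n) ℝ) (hQ : IsUnit Q.det)
    (hEsymm : E.IsSymm) (hEpd : (1 + E).PosDef)
    (A : Matrix (Fin n) (Fin n) ℝ) (hA : A = Q * (1 + E) * Qᵀ)
    (V : Matrix (Fin n) (Fin r) ℝ) (hV : Vᵀ * V = 1)
    (d : Fin r → ℝ) (hVD : E * V = V * diagonal d)
    (P : Matrix (Fin n) (Fin n) ℝ)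
    (hPdef : P = Q * (1 + V * diagonal d * Vᵀ) * Qᵀ) :
    ((1 + E) * (1 - V * Vᵀ)).trace = (P⁻¹ * A).trace - r := by
  have hU : IsUnit (1 + E).det := (Matrix.isUnit_iff_isUnit_det _).1 hEpd.isUnit
  have hEV : (1 + E) * V = V * (1 + diagonal d) := by
    rw [Matrix.add_mul, Matrix.mul_add, hVD, Matrix.one_mul, Matrix.mul_one]
  obtain ⟨W, hW⟩ : ∃ W : Matrix (Fin r) (Fin r) ℝ, W * (1 + diagonal d) = 1 := by
    refine ⟨Vᵀ * (1 + E)⁻¹ * V, ?_⟩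
    rw [Matrix.mul_assoc, ← hEV, Matrix.mul_assoc, Matrix.nonsing_inv_mul_cancel_left _ _ hU, hV]
  have hW' : (1 + diagonal d) * W = 1 := mul_eq_one_comm.1 hW
  have hVV : ∀ X : Matrix (Fin r) (Fin n) ℝ, Vᵀ * (V * X) = X := fun X => by
    rw [← Matrix.mul_assoc, hV, Matrix.one_mul]
  have hNM : (1 - V * Vᵀ + V * W * Vᵀ) * (1 + V * diagonal d * Vᵀ) = 1 := by
    have h1 : V * (W * (1 + diagonal d)) * Vᵀ = V * Vᵀ := by rw [hW, Matrix.mul_one]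
    simp only [Matrix.mul_add, Matrix.add_mul, Matrix.sub_mul, Matrix.mul_one, Matrix.one_mul,
      Matrix.mul_assoc, hVV] at h1 ⊢
    rw [← h1]
    abel
  have hQt : IsUnit Qᵀ.det := by rwa [Matrix.det_transpose]
  have hPinv : P⁻¹ = Qᵀ⁻¹ * (1 - V * Vᵀ + V * W * Vᵀ) * Q⁻¹ := by
    rw [hPdef, Matrix.mul_inv_rev, Matrix.mul_inv_rev, Matrix.inv_eq_left_inv hNM,
      ← Matrix.mul_assoc Qᵀ⁻¹]
  have hT : (P⁻¹ * A).trace = ((1 + E) * (1 - V * Vᵀ + V * W * Vᵀ)).trace := by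
    have : P⁻¹ * A = Qᵀ⁻¹ * ((1 - V * Vᵀ + V * W * Vᵀ) * (1 + E) * Qᵀ) := by
      rw [hPinv, hA]
      simp only [Matrix.mul_assoc]
      rw [Matrix.nonsing_inv_mul_cancel_left _ _ hQ]
    rw [this, Matrix.trace_mul_comm, Matrix.mul_assoc, Matrix.mul_nonsing_inv _ hQt,
      Matrix.mul_one, Matrix.trace_mul_comm]
  have hlast : (1 + E) * (V * W * Vᵀ) = V * Vᵀ := by
    rw [← Matrix.mul_assoc, ← Matrix.mul_assoc, hEV, Matrix.mul_assoc V, hW', Matrix.mul_one]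
  rw [hT, Matrix.mul_add, Matrix.trace_add, hlast, Matrix.trace_mul_comm V, hV, Matrix.trace_one,
    Fintype.card_fin]
  ring
end

section
/- Let 1 ≤ r < n, let Q be an invertible n×n real matrix, and let Ẽ be an n×n real symmetric matrix with I + Ẽ positive definite whose eigendecomposition is Ẽ = V·D·Vᵀ + W·Θ·Wᵀ, where the n×n matrix [V | W] is orthogonal, V is n×r, W is n×(n−r), and D and Θ are diagonal. Set A = Q·(I+Ẽ)·Qᵀ, and for α > 0 set P_α = Q·( α·(I − V·Vᵀ) + V·(I_r + D)·Vᵀ )·Qᵀ and M_α = S_α⁻¹·A·S_α⁻¹ where S_α is the positive definite square root of P_α. Let λ₁ = max_i (1 + Θ_{ii}) and λ_n = min_i (1 + Θ_{ii}). Then for every α > 0, κ₂(M_α) = max(1, λ₁/α) / min(1, λ_n/α). -/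
open Matrix

theorem aux_isUnit {n r k : ℕ} (V : Matrix (Fin n) (Fin r) ℝ) (W : Matrix (Fin n) (Fin k) ℝ)
    (hV : Vᵀ * V = 1) (hW : Wᵀ * W = 1) (hVW : Vᵀ * W = 0) (hWV : Wᵀ * V = 0)
    (hcomplete : V * Vᵀ + W * Wᵀ = 1) (a : Fin r → ℝ) (b : Fin k → ℝ) :
    IsUnit (V * diagonal a * Vᵀ + W * diagonal b * Wᵀ) ↔ (∀ i, a i ≠ 0) ∧ ∀ i, b i ≠ 0 := by
  have e1 : ∀ (a : Fin r → ℝ) (b : Fin k → ℝ),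
      (V * diagonal a * Vᵀ + W * diagonal b * Wᵀ) * V = V * diagonal a := by
    intro a b
    rw [Matrix.add_mul, Matrix.mul_assoc _ _ V, Matrix.mul_assoc _ _ V, hV, hWV]; simp
  have e2 : ∀ (a : Fin r → ℝ) (b : Fin k → ℝ),
      (V * diagonal a * Vᵀ + W * diagonal b * Wᵀ) * W = W * diagonal b := by
    intro a b
    rw [Matrix.add_mul, Matrix.mul_assoc _ _ W, Matrix.mul_assoc _ _ W, hVW, hW]; simp
  constructor
  · intro h
    obtain ⟨Y, hY⟩ := h.exists_left_inv
    have f1 : (Vᵀ * Y * V) * diagonal a = 1 := by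
      rw [Matrix.mul_assoc, ← e1 a b, ← Matrix.mul_assoc, Matrix.mul_assoc Vᵀ, hY,
        Matrix.mul_one, hV]
    have f2 : (Wᵀ * Y * W) * diagonal b = 1 := by
      rw [Matrix.mul_assoc, ← e2 a b, ← Matrix.mul_assoc, Matrix.mul_assoc Wᵀ, hY,
        Matrix.mul_one, hW]
    constructor
    · intro i hi
      have := congrFun (congrFun f1 i) i
      rw [Matrix.mul_diagonal, hi] at this
      simp at this
    · intro i hi
      have := congrFun (congrFun f2 i) i
      rw [Matrix.mul_diagonal, hi] at this
      simp at this
  · rintro ⟨ha, hb⟩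
    refine IsUnit.of_mul_eq_one
      (V * diagonal (fun i => (a i)⁻¹) * Vᵀ + W * diagonal (fun i => (b i)⁻¹) * Wᵀ) ?_
    have ga : diagonal a * diagonal (fun i => (a i)⁻¹) = 1 := by
      rw [diagonal_mul_diagonal, ← diagonal_one]
      congr 1; ext i; exact mul_inv_cancel₀ (ha i)
    have gb : diagonal b * diagonal (fun i => (b i)⁻¹) = 1 := by
      rw [diagonal_mul_diagonal, ← diagonal_one]
      congr 1; ext i; exact mul_inv_cancel₀ (hb i)
    rw [Matrix.mul_add, ← Matrix.mul_assoc, ← Matrix.mul_assoc, ← Matrix.mul_assoc,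
      ← Matrix.mul_assoc, e1, e2, Matrix.mul_assoc V, ga, Matrix.mul_assoc W, gb,
      Matrix.mul_one, Matrix.mul_one, hcomplete]

/-- with `λ₁ = max_i (1+Θ_{ii})` and `λ_n = min_i (1+Θ_{ii})`, for
every `α > 0`, `κ₂(M_α) = max(1, λ₁/α) / min(1, λ_n/α)`. -/
theorem stmt_12 (n r : ℕ) (hr : 1 ≤ r) (hrn : r < n)
    (Q E : Matrix (Fin n) (Fin n) ℝ) (hQ : IsUnit Q.det) (hEsymm : E.IsSymm)
    (hEpd : (1 + E).PosDef)
    (V : Matrix (Fin n) (Fin r) ℝ) (W : Matrix (Fin n) (Fin (n - r)) ℝ)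
    (hV : Vᵀ * V = 1) (hW : Wᵀ * W = 1) (hVW : Vᵀ * W = 0)
    (hcomplete : V * Vᵀ + W * Wᵀ = 1)
    (d : Fin r → ℝ) (t : Fin (n - r) → ℝ)
    (hE : E = V * diagonal d * Vᵀ + W * diagonal t * Wᵀ)
    (A : Matrix (Fin n) (Fin n) ℝ) (hA : A = Q * (1 + E) * Qᵀ)
    (P : ℝ → Matrix (Fin n) (Fin n) ℝ)
    (hP : ∀ α : ℝ, P α = Q * (α • (1 - V * Vᵀ) + V * (1 + diagonal d) * Vᵀ) * Qᵀ)
    (S : ℝ → Matrix (Fin n) (Fin n) ℝ)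
    (hS : ∀ α : ℝ, 0 < α → (S α).PosDef ∧ S α * S α = P α)
    (M : ℝ → Matrix (Fin n) (Fin n) ℝ)
    (hM : ∀ α : ℝ, M α = (S α)⁻¹ * A * (S α)⁻¹)
    (l1 ln : ℝ)
    (hl1 : IsGreatest {x : ℝ | ∃ i, x = 1 + t i} l1)
    (hln : IsLeast {x : ℝ | ∃ i, x = 1 + t i} ln) :
    ∀ α : ℝ, 0 < α → kappa2 (M α) = max 1 (l1 / α) / min 1 (ln / α) := by
  intro α hα
  obtain ⟨hSpd, hSS⟩ := hS α hα
  have hWV : Wᵀ * V = 0 := by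
    have := congrArg Matrix.transpose hVW
    simpa [Matrix.transpose_mul] using this
  have hWW : 1 - V * Vᵀ = W * Wᵀ := by rw [← hcomplete]; simp
  have hE1 : 1 + E = V * diagonal (fun i => 1 + d i) * Vᵀ
      + W * diagonal (fun i => 1 + t i) * Wᵀ := by
    have h1 : diagonal (fun i => 1 + d i) = 1 + diagonal d := by
      rw [← diagonal_one, diagonal_add]
    have h2 : diagonal (fun i => 1 + t i) = 1 + diagonal t := by
      rw [← diagonal_one, diagonal_add]
    rw [h1, h2, hE]
    nth_rewrite 1 [← hcomplete]
    simp only [Matrix.mul_add, Matrix.add_mul, Matrix.mul_one]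
    abel
  have hd : ∀ i, 1 + d i ≠ 0 := by
    have := hEpd.isUnit
    rw [hE1, aux_isUnit V W hV hW hVW hWV hcomplete] at this
    exact this.1
  have hSdet : IsUnit (S α).det := (Matrix.isUnit_iff_isUnit_det _).1 hSpd.isUnit
  have key : ∀ μ : ℝ, S α * (algebraMap ℝ _ μ - M α) * S α
      = Q * (V * diagonal (fun i => (μ - 1) * (1 + d i)) * Vᵀ
        + W * diagonal (fun i => μ * α - (1 + t i)) * Wᵀ) * Qᵀ := by
    intro μ
    have h1 : S α * (algebraMap ℝ _ μ - M α) * S α = μ • P α - A := by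
      rw [← hSS, hM, Matrix.mul_sub, Matrix.sub_mul, Algebra.algebraMap_eq_smul_one]
      congr 1
      · simp
      · rw [Matrix.mul_assoc _ A, Matrix.mul_nonsing_inv_cancel_left _ _ hSdet,
          Matrix.nonsing_inv_mul_cancel_right _ _ hSdet]
    have h2 : diagonal (fun i => (μ - 1) * (1 + d i))
        = μ • (1 + diagonal d) - diagonal (fun i => 1 + d i) := by
      rw [← diagonal_one, diagonal_add, ← diagonal_smul, diagonal_sub]
      congr 1; ext i; simp; ring
    have h3 : diagonal (fun i => μ * α - (1 + t i))
        = (μ * α) • 1 - diagonal (fun i => 1 + t i) := by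
      rw [← diagonal_one, ← diagonal_smul, diagonal_sub]
      congr 1; ext i; simp
    rw [h1, hP, hA, hE1, hWW, h2, h3, ← Matrix.smul_mul, ← Matrix.mul_smul, ← Matrix.sub_mul,
      ← Matrix.mul_sub]
    congr 2
    simp only [Matrix.mul_sub, Matrix.sub_mul, Matrix.mul_smul, Matrix.smul_mul, smul_add, Matrix.mul_add, Matrix.add_mul,
      smul_smul, Matrix.mul_one]
    abel
  have hspec : spectrum ℝ (M α) = insert 1 {x : ℝ | ∃ i, x = (1 + t i) / α} := by
    ext μ
    have h1 : IsUnit (algebraMap ℝ (Matrix (Fin n) (Fin n) ℝ) μ - M α) ↔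
        ((∀ i, (μ - 1) * (1 + d i) ≠ 0) ∧ ∀ i, μ * α - (1 + t i) ≠ 0) := by
      rw [← aux_isUnit V W hV hW hVW hWV hcomplete]
      have h2 := congrArg Matrix.det (key μ)
      rw [Matrix.det_mul, Matrix.det_mul, Matrix.det_mul, Matrix.det_mul,
        Matrix.det_transpose] at h2
      rw [Matrix.isUnit_iff_isUnit_det, Matrix.isUnit_iff_isUnit_det]
      have h3 := congrArg IsUnit h2
      simpa [IsUnit.mul_iff, hSdet, hQ, hSdet.ne_zero, hQ.ne_zero] using h3
    rw [spectrum.mem_iff, h1]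
    simp only [Set.mem_insert_iff, Set.mem_ofPred_eq]
    constructor
    · intro h
      by_contra hc
      push Not at hc
      refine h ⟨fun i => mul_ne_zero (sub_ne_zero.2 hc.1) (hd i), fun i hi => hc.2 i ?_⟩
      rw [eq_div_iff hα.ne']; linarith
    · rintro (rfl | ⟨i, hi⟩) ⟨h1, h2⟩
      · exact h1 ⟨0, hr⟩ (by simp)
      · apply h2 i
        rw [eq_div_iff hα.ne'] at hi; linarith
  have hG : IsGreatest {x : ℝ | ∃ i, x = (1 + t i) / α} (l1 / α) := by
    obtain ⟨⟨i, hi⟩, hu⟩ := hl1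
    refine ⟨⟨i, by rw [hi]⟩, ?_⟩
    rintro x ⟨j, rfl⟩
    exact div_le_div_of_nonneg_right (hu ⟨j, rfl⟩) hα.le
  have hL : IsLeast {x : ℝ | ∃ i, x = (1 + t i) / α} (ln / α) := by
    obtain ⟨⟨i, hi⟩, hu⟩ := hln
    refine ⟨⟨i, by rw [hi]⟩, ?_⟩
    rintro x ⟨j, rfl⟩
    exact div_le_div_of_nonneg_right (hu ⟨j, rfl⟩) hα.le
  rw [kappa2, hspec, (hG.insert 1).csSup_eq, (hL.insert 1).csInf_eq]
end

section
/- Let 1 ≤ r < n, let Q be an invertible n×n real matrix, and let Ẽ be an n×n real symmetric matrix with I + Ẽ positive definite whose eigendecomposition is Ẽ = V·D·Vᵀ + W·Θ·Wᵀ, where the n×n matrix [V | W] is orthogonal, V is n×r, W is n×(n−r), and D and Θ are diagonal. Set A = Q·(I+Ẽ)·Qᵀ, and for α > 0 set P_α = Q·( α·(I − V·Vᵀ) + V·(I_r + D)·Vᵀ )·Qᵀ and M_α = S_α⁻¹·A·S_α⁻¹ where S_α is the positive definite square root of P_α. Let λ₁ = max_i (1 + Θ_{ii}) and λ_n = min_i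 (1 + Θ_{ii}). Then κ₂(M_α) ≥ λ₁/λ_n for every α > 0, and κ₂(M_α) = λ₁/λ_n whenever λ_n ≤ α ≤ λ₁; hence every α in the interval [λ_n, λ₁] minimises the function α ↦ κ₂(M_α) over α > 0. -/
open Matrix

lemma isUnit_aux {n r s : ℕ} (V : Matrix (Fin n) (Fin r) ℝ) (W : Matrix (Fin n) (Fin s) ℝ)
    (hV : Vᵀ * V = 1) (hW : Wᵀ * W = 1) (hVW : Vᵀ * W = 0)
    (hc : V * Vᵀ + W * Wᵀ = 1) (a : Fin r → ℝ) (b : Fin s → ℝ) :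
    IsUnit (V * diagonal a * Vᵀ + W * diagonal b * Wᵀ) ↔ (∀ i, a i ≠ 0) ∧ (∀ j, b j ≠ 0) := by
  have hWV : Wᵀ * V = 0 := by
    have := congrArg Matrix.transpose hVW
    simpa using this
  have hXV : (V * diagonal a * Vᵀ + W * diagonal b * Wᵀ) * V = V * diagonal a := by
    simp only [Matrix.add_mul, Matrix.mul_assoc, hV, hWV]; simp
  have hXW : (V * diagonal a * Vᵀ + W * diagonal b * Wᵀ) * W = W * diagonal b := by
    simp only [Matrix.add_mul, Matrix.mul_assoc, hVW, hW]; simp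
  constructor
  · intro h
    obtain ⟨Y, hY⟩ := h.exists_left_inv
    have h1 : (Vᵀ * Y * V) * diagonal a = 1 := by
      rw [Matrix.mul_assoc, ← hXV, Matrix.mul_assoc Vᵀ, ← Matrix.mul_assoc Y, hY, Matrix.one_mul, hV]
    have h2 : (Wᵀ * Y * W) * diagonal b = 1 := by
      rw [Matrix.mul_assoc, ← hXW, Matrix.mul_assoc Wᵀ, ← Matrix.mul_assoc Y, hY, Matrix.one_mul, hW]
    constructor
    · intro i hi
      have := congrFun (congrFun h1 i) i
      rw [Matrix.mul_diagonal, hi] at this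
      simp at this
    · intro i hi
      have := congrFun (congrFun h2 i) i
      rw [Matrix.mul_diagonal, hi] at this
      simp at this
  · rintro ⟨ha, hb⟩
    have hda : diagonal a * diagonal (fun i => (a i)⁻¹) = 1 := by
      rw [Matrix.diagonal_mul_diagonal, ← Matrix.diagonal_one]
      congr 1; funext i; exact mul_inv_cancel₀ (ha i)
    have hdb : diagonal b * diagonal (fun i => (b i)⁻¹) = 1 := by
      rw [Matrix.diagonal_mul_diagonal, ← Matrix.diagonal_one]
      congr 1; funext i; exact mul_inv_cancel₀ (hb i)
    apply IsUnit.of_mul_eq_one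
      (V * diagonal (fun i => (a i)⁻¹) * Vᵀ + W * diagonal (fun i => (b i)⁻¹) * Wᵀ)
    rw [Matrix.mul_add, ← Matrix.mul_assoc, ← Matrix.mul_assoc, ← Matrix.mul_assoc, ← Matrix.mul_assoc,
      hXV, hXW, Matrix.mul_assoc V, hda, Matrix.mul_assoc W, hdb, Matrix.mul_one, Matrix.mul_one, hc]

/-- `κ₂(M_α) ≥ λ₁/λ_n` for all `α > 0`, with equality whenever
`λ_n ≤ α ≤ λ₁`; hence every `α ∈ [λ_n, λ₁]` minimises `α ↦ κ₂(M_α)` over `α > 0`. -/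
theorem stmt_13 (n r : ℕ) (hr : 1 ≤ r) (hrn : r < n)
    (Q E : Matrix (Fin n) (Fin n) ℝ) (hQ : IsUnit Q.det) (hEsymm : E.IsSymm)
    (hEpd : (1 + E).PosDef)
    (V : Matrix (Fin n) (Fin r) ℝ) (W : Matrix (Fin n) (Fin (n - r)) ℝ)
    (hV : Vᵀ * V = 1) (hW : Wᵀ * W = 1) (hVW : Vᵀ * W = 0)
    (hcomplete : V * Vᵀ + W * Wᵀ = 1)
    (d : Fin r → ℝ) (t : Fin (n - r) → ℝ)
    (hE : E = V * diagonal d * Vᵀ + W * diagonal t * Wᵀ)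
    (A : Matrix (Fin n) (Fin n) ℝ) (hA : A = Q * (1 + E) * Qᵀ)
    (P : ℝ → Matrix (Fin n) (Fin n) ℝ)
    (hP : ∀ α : ℝ, P α = Q * (α • (1 - V * Vᵀ) + V * (1 + diagonal d) * Vᵀ) * Qᵀ)
    (S : ℝ → Matrix (Fin n) (Fin n) ℝ)
    (hS : ∀ α : ℝ, 0 < α → (S α).PosDef ∧ S α * S α = P α)
    (M : ℝ → Matrix (Fin n) (Fin n) ℝ)
    (hM : ∀ α : ℝ, M α = (S α)⁻¹ * A * (S α)⁻¹)
    (l1 ln : ℝ)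
    (hl1 : IsGreatest {x : ℝ | ∃ i, x = 1 + t i} l1)
    (hln : IsLeast {x : ℝ | ∃ i, x = 1 + t i} ln) :
    (∀ α : ℝ, 0 < α → l1 / ln ≤ kappa2 (M α)) ∧
    (∀ α : ℝ, ln ≤ α → α ≤ l1 → kappa2 (M α) = l1 / ln) ∧
    (∀ α ∈ Set.Icc ln l1, ∀ β : ℝ, 0 < β → kappa2 (M α) ≤ kappa2 (M β)) := by
  have hdec : ∀ μ α : ℝ, μ • (α • (1 - V * Vᵀ) + V * (1 + diagonal d) * Vᵀ) - (1 + E)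
      = V * diagonal (fun i => (μ - 1) * (1 + d i)) * Vᵀ
        + W * diagonal (fun j => μ * α - (1 + t j)) * Wᵀ := by
    intro μ α
    have e1 : (diagonal (fun i => (μ - 1) * (1 + d i)) : Matrix (Fin r) (Fin r) ℝ)
        = (μ - 1) • (1 + diagonal d) := by
      ext i j
      by_cases h : i = j
      · subst h; simp
      · simp [h]
    have e2 : (diagonal (fun j => μ * α - (1 + t j)) : Matrix (Fin (n - r)) (Fin (n - r)) ℝ)
        = (μ * α) • 1 - (1 + diagonal t) := by
      ext i j
      by_cases h : i = j
      · subst h; simp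
      · simp [h]
    have e3 : (1 : Matrix (Fin n) (Fin n) ℝ) - V * Vᵀ = W * Wᵀ := by
      rw [← hcomplete]; abel
    rw [e1, e2, e3, hE, ← hcomplete]
    simp only [Matrix.mul_add, Matrix.add_mul, Matrix.mul_sub, Matrix.sub_mul, Matrix.mul_smul, Matrix.smul_mul,
      Matrix.mul_one, smul_add, smul_smul, sub_smul, one_smul]
    abel
  have hW1 : Wᵀ * (1 + E) * W = diagonal (fun j => 1 + t j) := by
    have hWV : Wᵀ * V = 0 := by
      have := congrArg Matrix.transpose hVW
      simpa using this
    have : E * W = W * diagonal t := by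
      rw [hE]; simp only [Matrix.add_mul, Matrix.mul_assoc, hVW, hW]; simp
    rw [Matrix.mul_assoc, Matrix.add_mul, this, Matrix.one_mul, Matrix.mul_add, ← Matrix.mul_assoc, hW,
      Matrix.one_mul, ← Matrix.diagonal_one, Matrix.diagonal_add]
  have hinj : Function.Injective W.mulVec := by
    intro x y hxy
    have := congrArg (fun v => Wᵀ *ᵥ v) hxy
    simpa [Matrix.mulVec_mulVec, hW] using this
  have htpos : ∀ j, 0 < 1 + t j := by
    have h := hEpd.conjTranspose_mul_mul_same hinj
    rw [Matrix.conjTranspose_eq_transpose_of_trivial, hW1] at h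
    exact Matrix.posDef_diagonal_iff.mp h
  have hdne : ∀ i, 1 + d i ≠ 0 := by
    have h := hdec 0 0
    have hu : IsUnit ((0:ℝ) • ((0:ℝ) • (1 - V * Vᵀ) + V * (1 + diagonal d) * Vᵀ) - (1 + E)) := by
      rw [zero_smul, zero_sub]; exact hEpd.isUnit.neg
    rw [h, isUnit_aux V W hV hW hVW hcomplete] at hu
    intro i hi
    exact hu.1 i (by simp [hi])
  have hQu : IsUnit Q := (Matrix.isUnit_iff_isUnit_det Q).2 hQ
  have hQtu : IsUnit Qᵀ := by
    rw [Matrix.isUnit_iff_isUnit_det, Matrix.det_transpose]; exact hQ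
  have hspec : ∀ α : ℝ, 0 < α → ∀ μ : ℝ, μ ∈ spectrum ℝ (M α) ↔ (μ = 1 ∨ ∃ j, μ = (1 + t j) / α) := by
    intro α hα μ
    obtain ⟨hSp, hSS⟩ := hS α hα
    have hSu : IsUnit (S α) := hSp.isUnit
    have hSd : IsUnit (S α).det := (Matrix.isUnit_iff_isUnit_det _).1 hSu
    have key : S α * (algebraMap ℝ (Matrix (Fin n) (Fin n) ℝ) μ - M α) * S α
        = Q * (μ • (α • (1 - V * Vᵀ) + V * (1 + diagonal d) * Vᵀ) - (1 + E)) * Qᵀ := by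
      have hMS : S α * M α * S α = A := by
        rw [hM]
        calc S α * ((S α)⁻¹ * A * (S α)⁻¹) * S α
            = (S α * (S α)⁻¹) * A * ((S α)⁻¹ * S α) := by simp only [Matrix.mul_assoc]
          _ = A := by rw [Matrix.mul_nonsing_inv _ hSd, Matrix.nonsing_inv_mul _ hSd]; simp
      rw [Matrix.mul_sub, Matrix.sub_mul, hMS, Matrix.mul_sub, Matrix.sub_mul, ← hA,
        Algebra.algebraMap_eq_smul_one, Matrix.mul_smul, Matrix.smul_mul, Matrix.mul_one, hSS, hP,
        Matrix.mul_smul, Matrix.smul_mul]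
    have hiff : IsUnit (algebraMap ℝ (Matrix (Fin n) (Fin n) ℝ) μ - M α) ↔
        (∀ i, (μ - 1) * (1 + d i) ≠ 0) ∧ (∀ j, μ * α - (1 + t j) ≠ 0) := by
      rw [← isUnit_aux V W hV hW hVW hcomplete, ← hdec]
      have three : ∀ X Y Z : Matrix (Fin n) (Fin n) ℝ, IsUnit X → IsUnit Z →
          (IsUnit (X * Y * Z) ↔ IsUnit Y) := by
        intro X Y Z hX hZ
        rw [Matrix.isUnit_iff_isUnit_det] at hX hZ
        rw [Matrix.isUnit_iff_isUnit_det, Matrix.isUnit_iff_isUnit_det, Matrix.det_mul,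
          Matrix.det_mul, IsUnit.mul_iff, IsUnit.mul_iff]
        tauto
      rw [← three _ _ _ hSu hSu, key, three _ _ _ hQu hQtu]
    rw [spectrum.mem_iff, hiff]
    constructor
    · intro h
      by_contra hcon
      push Not at hcon
      refine h ⟨fun i => mul_ne_zero (sub_ne_zero.2 hcon.1) (hdne i), fun j hj => hcon.2 j ?_⟩
      rw [eq_div_iff hα.ne']; linarith
    · rintro (h | ⟨j, h⟩) ⟨h1, h2⟩
      · exact h1 ⟨0, hr⟩ (by simp [h])
      · refine h2 j ?_
        rw [h]; field_simp; simp
  obtain ⟨⟨i1, hi1⟩, hl1u⟩ := hl1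
  obtain ⟨⟨i0, hi0⟩, hlnl⟩ := hln
  have hlnpos : 0 < ln := by rw [hi0]; exact htpos i0
  have hkap : ∀ α : ℝ, 0 < α → kappa2 (M α) = max 1 (l1 / α) / min 1 (ln / α) := by
    intro α hα
    have hG : IsGreatest (spectrum ℝ (M α)) (max 1 (l1 / α)) := by
      constructor
      · rw [hspec α hα]
        rcases max_choice 1 (l1 / α) with h | h
        · exact Or.inl h
        · exact Or.inr ⟨i1, by rw [h, hi1]⟩
      · intro μ hμ
        rcases (hspec α hα μ).1 hμ with h | ⟨j, h⟩
        · rw [h]; exact le_max_left _ _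
        · rw [h]
          exact le_max_of_le_right (div_le_div_of_nonneg_right (hl1u ⟨j, rfl⟩) hα.le)
    have hL : IsLeast (spectrum ℝ (M α)) (min 1 (ln / α)) := by
      constructor
      · rw [hspec α hα]
        rcases min_choice 1 (ln / α) with h | h
        · exact Or.inl h
        · exact Or.inr ⟨i0, by rw [h, hi0]⟩
      · intro μ hμ
        rcases (hspec α hα μ).1 hμ with h | ⟨j, h⟩
        · rw [h]; exact min_le_left _ _
        · rw [h]
          exact min_le_of_right_le (div_le_div_of_nonneg_right (hlnl ⟨j, rfl⟩) hα.le)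
    rw [kappa2, hG.csSup_eq, hL.csInf_eq]
  have h1 : ∀ α : ℝ, 0 < α → l1 / ln ≤ kappa2 (M α) := by
    intro α hα
    rw [hkap α hα]
    have e : l1 / ln = (l1 / α) / (ln / α) := by field_simp
    rw [e]
    exact div_le_div₀ (le_trans zero_le_one (le_max_left _ _)) (le_max_right _ _)
      (lt_min one_pos (div_pos hlnpos hα)) (min_le_right _ _)
  have h2 : ∀ α : ℝ, ln ≤ α → α ≤ l1 → kappa2 (M α) = l1 / ln := by
    intro α ha hb
    have hα : 0 < α := lt_of_lt_of_le hlnpos ha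
    rw [hkap α hα, max_eq_right ((one_le_div hα).2 hb), min_eq_right ((div_le_one hα).2 ha)]
    field_simp
  exact ⟨h1, h2, fun α hα β hβ => by rw [h2 α hα.1 hα.2]; exact h1 β hβ⟩
end

section
/- Let n ≥ 1, let A be an n×n real symmetric positive definite matrix, and let C be a nonempty set of n×n real symmetric positive definite matrices that is a cone, i.e. c·P ∈ C whenever P ∈ C and c > 0. Then inf { D_LD(A,P) : P ∈ C } = inf { ln K(P⁻¹·A) : P ∈ C } (both infima taken in ℝ; both sets are bounded below by 0). -/
open Matrix

open scoped MatrixOrder in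
theorem trace_pos_aux {n : ℕ} (hn : 1 ≤ n) {A P : Matrix (Fin n) (Fin n) ℝ} (hA : A.PosDef)
    (hP : P.PosDef) : 0 < (A * P).trace := by
  have : Nonempty (Fin n) := ⟨⟨0, hn⟩⟩
  obtain ⟨B, hB⟩ : ∃ B : Matrix (Fin n) (Fin n) ℝ, P = Bᴴ * B :=
    CStarAlgebra.nonneg_iff_eq_star_mul_self.mp hP.posSemidef.nonneg
  have hBu : IsUnit B := by
    rw [Matrix.isUnit_iff_isUnit_det, isUnit_iff_ne_zero]
    intro h0
    have := hP.det_pos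
    rw [hB, Matrix.det_mul, h0] at this
    simp at this
  have h1 : (B * A * Bᴴ).PosDef := by
    apply hA.mul_mul_conjTranspose_same
    exact Matrix.vecMul_injective_of_isUnit hBu
  rw [hB, ← Matrix.mul_assoc, Matrix.trace_mul_comm, ← Matrix.mul_assoc]
  exact h1.trace_pos

theorem sInf_eq_aux {S T : Set ℝ} (hS : S.Nonempty) (hST : ∀ x ∈ S, ∃ y ∈ T, y ≤ x)
    (hTS : ∀ x ∈ T, ∃ y ∈ S, y ≤ x) : sInf S = sInf T := by
  have hl : lowerBounds S = lowerBounds T := by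
    ext b
    constructor
    · intro h x hx
      obtain ⟨y, hy, hyx⟩ := hTS x hx
      exact (h hy).trans hyx
    · intro h x hx
      obtain ⟨y, hy, hyx⟩ := hST x hx
      exact (h hy).trans hyx
  have hT : T.Nonempty := by
    obtain ⟨x, hx⟩ := hS
    obtain ⟨y, hy, _⟩ := hST x hx
    exact ⟨y, hy⟩
  by_cases hb : BddBelow S
  · have hb' : BddBelow T := by
      unfold BddBelow at hb ⊢
      rwa [← hl]
    have h1 := isGLB_csInf hS hb
    have h2 := isGLB_csInf hT hb'
    unfold IsGLB at h1 h2
    rw [hl] at h1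
    exact h1.unique h2
  · have hb' : ¬ BddBelow T := by
      unfold BddBelow at hb ⊢
      rwa [← hl]
    rw [Real.sInf_of_not_bddBelow hb, Real.sInf_of_not_bddBelow hb']

theorem log_kap_aux {n : ℕ} (hn : 1 ≤ n) {A P : Matrix (Fin n) (Fin n) ℝ} (hA : A.PosDef)
    (hP : P.PosDef) : Real.log (Kap (P⁻¹ * A)) =
      n * Real.log ((A * P⁻¹).trace / n) - Real.log (A * P⁻¹).det := by
  have ht := trace_pos_aux hn hA hP.inv
  have hd : 0 < (A * P⁻¹).det := by
    rw [Matrix.det_mul]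
    exact mul_pos hA.det_pos hP.inv.det_pos
  have hn' : (0 : ℝ) < n := by exact_mod_cast hn
  unfold Kap
  rw [Matrix.trace_mul_comm, Matrix.det_mul_comm, Real.log_div (by positivity) hd.ne',
    Real.log_pow]

/-- over a nonempty cone of symmetric positive definite matrices,
the infimum of the Bregman divergence equals the infimum of the log Kaporin
condition number. -/
theorem stmt_14 (n : ℕ) (hn : 1 ≤ n) (A : Matrix (Fin n) (Fin n) ℝ) (hA : A.PosDef)
    (C : Set (Matrix (Fin n) (Fin n) ℝ)) (hCne : C.Nonempty)
    (hCpd : ∀ P ∈ C, P.PosDef)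
    (hCcone : ∀ P ∈ C, ∀ c : ℝ, 0 < c → c • P ∈ C) :
    sInf ((fun P => DLD A P) '' C) = sInf ((fun P => Real.log (Kap (P⁻¹ * A))) '' C) := by
  have hn' : (0 : ℝ) < n := by exact_mod_cast hn
  apply sInf_eq_aux (hCne.image _)
  · rintro _ ⟨P, hP, rfl⟩
    refine ⟨_, ⟨P, hP, rfl⟩, ?_⟩
    have ht := trace_pos_aux hn hA (hCpd P hP).inv
    simp only [log_kap_aux hn hA (hCpd P hP), DLD]
    have h1 := Real.log_le_sub_one_of_pos (div_pos ht hn')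
    have h2 := mul_le_mul_of_nonneg_left h1 hn'.le
    have h3 : (n : ℝ) * ((A * P⁻¹).trace / n - 1) = (A * P⁻¹).trace - n := by
      field_simp
    linarith
  · rintro _ ⟨P, hP, rfl⟩
    have ht := trace_pos_aux hn hA (hCpd P hP).inv
    have hd : 0 < (A * P⁻¹).det := by
      rw [Matrix.det_mul]
      exact mul_pos hA.det_pos (hCpd P hP).inv.det_pos
    have hc := div_pos ht hn'
    refine ⟨_, ⟨_, hCcone P hP _ hc, rfl⟩, ?_⟩
    simp only [log_kap_aux hn hA (hCpd P hP), DLD]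
    set c := (A * P⁻¹).trace / n with hcdef
    have hinv : (c • P)⁻¹ = c⁻¹ • P⁻¹ := by
      apply Matrix.inv_eq_left_inv
      rw [Matrix.smul_mul, Matrix.mul_smul, smul_smul, inv_mul_cancel₀ hc.ne', one_smul,
        Matrix.nonsing_inv_mul _ (isUnit_iff_ne_zero.2 (hCpd P hP).det_pos.ne')]
    have h3 : c⁻¹ * (A * P⁻¹).trace = n := by
      rw [hcdef]
      field_simp
    rw [hinv, Matrix.mul_smul, Matrix.trace_smul, Matrix.det_smul, smul_eq_mul, h3,
      Real.log_mul (by positivity) hd.ne', Real.log_pow, Real.log_inv, Fintype.card_fin]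
    linarith
end

section
/- Let n ≥ 1, let A be an n×n real symmetric positive definite matrix, and let C be a set of n×n real symmetric positive definite matrices that is a cone, i.e. c·P ∈ C whenever P ∈ C and c > 0. If P* ∈ C satisfies D_LD(A,P*) ≤ D_LD(A,P) for all P ∈ C, then P* also satisfies ln K((P*)⁻¹·A) ≤ ln K(P⁻¹·A) for all P ∈ C; that is, every minimiser of the Bregman divergence over C is a minimiser of Kaporin's condition number over C. -/
open Matrix

open scoped MatrixOrder Matrix.Norms.L2Operator in
theorem aux_trace_pos_s15 {n : ℕ} (hn : 1 ≤ n) (A Q : Matrix (Fin n) (Fin n) ℝ)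
    (hA : A.PosDef) (hQ : Q.PosDef) : 0 < (A * Q).trace := by
  have : Nonempty (Fin n) := ⟨⟨0, hn⟩⟩
  obtain ⟨B, hB⟩ : ∃ B : Matrix (Fin n) (Fin n) ℝ, A = Bᴴ * B := by
    obtain ⟨B, hB⟩ := CStarAlgebra.nonneg_iff_eq_star_mul_self.mp hA.posSemidef.nonneg
    exact ⟨B, hB⟩
  have hdet : IsUnit B.det := by
    have h := hA.det_pos
    rw [hB, det_mul] at h
    exact isUnit_iff_ne_zero.mpr (right_ne_zero_of_mul h.ne')
  have h1 : (B * Q * Bᴴ).PosDef := by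
    apply hQ.mul_mul_conjTranspose_same
    exact Matrix.vecMul_injective_of_isUnit ((Matrix.isUnit_iff_isUnit_det B).mpr hdet)
  have h2 := h1.trace_pos
  rw [Matrix.trace_mul_comm, ← Matrix.mul_assoc, ← hB] at h2
  exact h2

theorem stmt_15 (n : ℕ) (hn : 1 ≤ n) (A : Matrix (Fin n) (Fin n) ℝ) (hA : A.PosDef)
    (C : Set (Matrix (Fin n) (Fin n) ℝ))
    (hCpd : ∀ P ∈ C, P.PosDef)
    (hCcone : ∀ P ∈ C, ∀ c : ℝ, 0 < c → c • P ∈ C)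
    (Pstar : Matrix (Fin n) (Fin n) ℝ) (hPstar : Pstar ∈ C)
    (hmin : ∀ P ∈ C, DLD A Pstar ≤ DLD A P) :
    ∀ P ∈ C, Real.log (Kap (Pstar⁻¹ * A)) ≤ Real.log (Kap (P⁻¹ * A)) := by
  intro P hP
  have hn0 : (0 : ℝ) < n := by exact_mod_cast hn
  have key : ∀ R ∈ C, 0 < (A * R⁻¹).trace ∧ 0 < (A * R⁻¹).det ∧
      Real.log (Kap (R⁻¹ * A)) =
        n * Real.log ((A * R⁻¹).trace / n) - Real.log (A * R⁻¹).det := by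
    intro R hR
    have hi := (hCpd R hR).inv
    have ht := aux_trace_pos_s15 hn A R⁻¹ hA hi
    have hd : 0 < (A * R⁻¹).det := by
      rw [det_mul]; exact mul_pos hA.det_pos hi.det_pos
    refine ⟨ht, hd, ?_⟩
    unfold Kap
    rw [Matrix.trace_mul_comm, Matrix.det_mul_comm,
      Real.log_div (pow_pos (div_pos ht hn0) n).ne' hd.ne', Real.log_pow]
  obtain ⟨ht, hd, hK⟩ := key P hP
  obtain ⟨hts, hds, hKs⟩ := key Pstar hPstar
  have hc : 0 < (A * P⁻¹).trace / n := div_pos ht hn0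
  have h := hmin _ (hCcone P hP _ hc)
  set t := (A * P⁻¹).trace with htdef
  set c := t / n with hcdef
  have hinv : (c • P)⁻¹ = c⁻¹ • P⁻¹ := by
    apply Matrix.inv_eq_right_inv
    rw [Matrix.smul_mul, Matrix.mul_smul, smul_smul, mul_inv_cancel₀ hc.ne', one_smul,
      Matrix.mul_nonsing_inv _ (isUnit_iff_ne_zero.mpr (hCpd P hP).det_pos.ne')]
  have h3 : DLD A (c • P) = n * Real.log c - Real.log (A * P⁻¹).det := by
    unfold DLD
    rw [hinv, Matrix.mul_smul, Matrix.trace_smul, Matrix.det_smul, Fintype.card_fin,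
      Real.log_mul (pow_pos (inv_pos.mpr hc) n).ne' hd.ne', Real.log_pow, Real.log_inv,
      ← htdef, smul_eq_mul]
    have : c⁻¹ * t = n := by
      rw [hcdef]; field_simp
    rw [this]; ring
  rw [hK, hKs, ← h3]
  refine le_trans ?_ h
  unfold DLD
  have hl := Real.log_le_sub_one_of_pos (div_pos hts hn0)
  have hm := mul_le_mul_of_nonneg_left hl hn0.le
  have : (n : ℝ) * ((A * Pstar⁻¹).trace / n - 1) = (A * Pstar⁻¹).trace - n := by
    field_simp
  linarith
end

section
/- Let n ≥ 1, let A be an n×n real symmetric positive definite matrix, and let C be a set of n×n real symmetric positive definite matrices that is a cone, i.e. c·P ∈ C whenever P ∈ C and c > 0. Let S₁ be the set of minimisers of P ↦ D_LD(A,P) over C and S₂ the set of minimisers of P ↦ K(P⁻¹·A) over C. Then S₂ = { c·P : c > 0, P ∈ S₁ }, i.e. S₂ equals the conic hull of S₁. -/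
open Matrix

open scoped MatrixOrder Matrix.Norms.L2Operator in
lemma factor_aux {n : ℕ} (Q : Matrix (Fin n) (Fin n) ℝ) (hQ : Q.PosDef) :
    ∃ S : Matrix (Fin n) (Fin n) ℝ, IsUnit S ∧ Q = Sᴴ * S :=
  (CStarAlgebra.isStrictlyPositive_iff_eq_star_mul_self).1 hQ.isStrictlyPositive

lemma dld_facts {n : ℕ} (hn : 1 ≤ n) (A P : Matrix (Fin n) (Fin n) ℝ) (hA : A.PosDef)
    (hP : P.PosDef) : 0 < (A * P⁻¹).trace ∧ 0 < (A * P⁻¹).det := by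
  haveI : Nonempty (Fin n) := ⟨⟨0, hn⟩⟩
  have hQ := hP.inv
  refine ⟨?_, ?_⟩
  · obtain ⟨S, hS, hSQ⟩ := factor_aux _ hQ
    have h : (S * A * Sᴴ).PosDef := by
      apply hA.mul_mul_conjTranspose_same
      exact Matrix.vecMul_injective_of_isUnit hS
    have := h.trace_pos
    rw [hSQ, ← Matrix.mul_assoc, Matrix.trace_mul_comm, ← Matrix.mul_assoc]
    exact this
  · rw [Matrix.det_mul]
    exact mul_pos hA.det_pos hQ.det_pos

lemma smul_facts {n : ℕ} (A P : Matrix (Fin n) (Fin n) ℝ) (hP : P.PosDef) (c : ℝ) (hc : 0 < c) :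
    A * (c • P)⁻¹ = c⁻¹ • (A * P⁻¹) := by
  haveI := invertibleOfNonzero hc.ne'
  rw [Matrix.inv_smul P c (isUnit_iff_ne_zero.2 hP.det_pos.ne'), invOf_eq_inv, Matrix.mul_smul]

lemma kap_comm {n : ℕ} (A P : Matrix (Fin n) (Fin n) ℝ) : Kap (P⁻¹ * A) = Kap (A * P⁻¹) := by
  unfold Kap
  rw [Matrix.trace_mul_comm, Matrix.det_mul_comm]

lemma kap_smul {n : ℕ} (M : Matrix (Fin n) (Fin n) ℝ) (c : ℝ) (hc : 0 < c) :
    Kap (c • M) = Kap M := by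
  unfold Kap
  rw [Matrix.trace_smul, Matrix.det_smul, Fintype.card_fin, smul_eq_mul, mul_div_assoc, mul_pow,
    mul_div_mul_left _ _ (pow_pos hc n).ne']

lemma kap_pos {n : ℕ} (hn : 1 ≤ n) (M : Matrix (Fin n) (Fin n) ℝ) (ht : 0 < M.trace)
    (hd : 0 < M.det) : 0 < Kap M := by
  have : (0:ℝ) < n := by exact_mod_cast hn
  unfold Kap
  positivity

lemma log_kap {n : ℕ} (hn : 1 ≤ n) (M : Matrix (Fin n) (Fin n) ℝ) (ht : 0 < M.trace)
    (hd : 0 < M.det) : Real.log (Kap M) = n * Real.log (M.trace / n) - Real.log M.det := by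
  have : (0:ℝ) < n := by exact_mod_cast hn
  unfold Kap
  rw [Real.log_div (by positivity) hd.ne', Real.log_pow]

lemma log_kap_le {n : ℕ} (hn : 1 ≤ n) (A P : Matrix (Fin n) (Fin n) ℝ) (hA : A.PosDef)
    (hP : P.PosDef) : Real.log (Kap (A * P⁻¹)) ≤ DLD A P := by
  have h0 : (0:ℝ) < n := by exact_mod_cast hn
  obtain ⟨ht, hd⟩ := dld_facts hn A P hA hP
  rw [log_kap hn _ ht hd]
  unfold DLD
  have h1 := mul_le_mul_of_nonneg_left (Real.log_le_sub_one_of_pos (div_pos ht h0)) h0.le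
  rw [mul_sub, mul_div_cancel₀ _ h0.ne'] at h1
  linarith

lemma dld_opt {n : ℕ} (hn : 1 ≤ n) (A P : Matrix (Fin n) (Fin n) ℝ) (hA : A.PosDef)
    (hP : P.PosDef) : ∃ c : ℝ, 0 < c ∧ DLD A (c • P) = Real.log (Kap (A * P⁻¹)) := by
  have h0 : (0:ℝ) < n := by exact_mod_cast hn
  obtain ⟨ht, hd⟩ := dld_facts hn A P hA hP
  refine ⟨(A * P⁻¹).trace / n, div_pos ht h0, ?_⟩
  rw [log_kap hn _ ht hd]
  unfold DLD
  rw [smul_facts A P hP _ (div_pos ht h0), Matrix.trace_smul, Matrix.det_smul, Fintype.card_fin,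
    Real.log_mul (by positivity) hd.ne', Real.log_pow, Real.log_inv, smul_eq_mul]
  field_simp
  ring

/-- the set of minimisers of Kaporin's condition number over a cone
equals the conic hull of the set of minimisers of the Bregman divergence. -/
theorem stmt_16 (n : ℕ) (hn : 1 ≤ n) (A : Matrix (Fin n) (Fin n) ℝ) (hA : A.PosDef)
    (C : Set (Matrix (Fin n) (Fin n) ℝ))
    (hCpd : ∀ P ∈ C, P.PosDef)
    (hCcone : ∀ P ∈ C, ∀ c : ℝ, 0 < c → c • P ∈ C)
    (S₁ S₂ : Set (Matrix (Fin n) (Fin n) ℝ))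
    (hS₁ : S₁ = {P | P ∈ C ∧ ∀ R ∈ C, DLD A P ≤ DLD A R})
    (hS₂ : S₂ = {P | P ∈ C ∧ ∀ R ∈ C, Kap (P⁻¹ * A) ≤ Kap (R⁻¹ * A)}) :
    S₂ = {M | ∃ c : ℝ, 0 < c ∧ ∃ P ∈ S₁, M = c • P} := by
  subst hS₁ hS₂
  have kp : ∀ P ∈ C, 0 < Kap (A * P⁻¹) := fun P hP =>
    kap_pos hn _ (dld_facts hn A P hA (hCpd P hP)).1 (dld_facts hn A P hA (hCpd P hP)).2
  ext M
  simp only [Set.mem_setOf_eq, kap_comm]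
  constructor
  · rintro ⟨hM, hmin⟩
    obtain ⟨c, hc, hcM⟩ := dld_opt hn A M hA (hCpd M hM)
    refine ⟨c⁻¹, inv_pos.2 hc, c • M, ⟨hCcone M hM c hc, fun R hR => ?_⟩, ?_⟩
    · rw [hcM]
      exact (Real.log_le_log (kp M hM) (hmin R hR)).trans (log_kap_le hn A R hA (hCpd R hR))
    · rw [smul_smul, inv_mul_cancel₀ hc.ne', one_smul]
  · rintro ⟨c, hc, P, ⟨hP, hmin⟩, rfl⟩
    refine ⟨hCcone P hP c hc, fun R hR => ?_⟩
    rw [smul_facts A P (hCpd P hP) c hc, kap_smul _ _ (inv_pos.2 hc)]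
    obtain ⟨b, hb, hbR⟩ := dld_opt hn A R hA (hCpd R hR)
    rw [← Real.log_le_log_iff (kp P hP) (kp R hR), ← hbR]
    exact (log_kap_le hn A P hA (hCpd P hP)).trans (hmin _ (hCcone R hR b hb))
end

section
/- Let n ≥ 1, let A be an n×n real symmetric positive definite matrix, and let C be a set of n×n real symmetric positive definite matrices that is a cone, i.e. c·P ∈ C whenever P ∈ C and c > 0. If P ∈ C satisfies D_LD(A,P) ≤ D_LD(A,R) for all R ∈ C, then trace(P⁻¹·A) = n. -/
open Matrix

/-- any minimiser of the Bregman divergence over a cone of symmetric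
positive definite matrices satisfies `trace(P⁻¹·A) = n`. -/
theorem stmt_17 (n : ℕ) (hn : 1 ≤ n) (A : Matrix (Fin n) (Fin n) ℝ) (hA : A.PosDef)
    (C : Set (Matrix (Fin n) (Fin n) ℝ))
    (hCpd : ∀ P ∈ C, P.PosDef)
    (hCcone : ∀ P ∈ C, ∀ c : ℝ, 0 < c → c • P ∈ C)
    (P : Matrix (Fin n) (Fin n) ℝ) (hP : P ∈ C)
    (hmin : ∀ R ∈ C, DLD A P ≤ DLD A R) :
    (P⁻¹ * A).trace = n := by
  have hPd := hCpd P hP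
  have hdet : 0 < (A * P⁻¹).det := by
    rw [Matrix.det_mul]
    exact mul_pos hA.det_pos hPd.inv.det_pos
  have key : ∀ t : ℝ, 0 < t →
      (A * P⁻¹).trace ≤ t * (A * P⁻¹).trace - n * Real.log t := by
    intro t ht
    have h := hmin _ (hCcone P hP t⁻¹ (inv_pos.mpr ht))
    have hinv : (t⁻¹ • P)⁻¹ = t • P⁻¹ := by
      apply Matrix.inv_eq_right_inv
      rw [Matrix.smul_mul, Matrix.mul_smul, smul_smul, inv_mul_cancel₀ ht.ne', one_smul]
      exact Matrix.mul_nonsing_inv P hPd.det_pos.ne'.isUnit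
    unfold DLD at h
    rw [hinv, Matrix.mul_smul, Matrix.trace_smul, Matrix.det_smul, Fintype.card_fin,
      Real.log_mul (pow_pos ht n).ne' hdet.ne', Real.log_pow, smul_eq_mul] at h
    linarith
  have hd : HasDerivAt (fun t : ℝ => t * (A * P⁻¹).trace - n * Real.log t)
      (1 * (A * P⁻¹).trace - n * (1 : ℝ)⁻¹) 1 :=
    ((hasDerivAt_id (1 : ℝ)).mul_const _).sub
      ((Real.hasDerivAt_log one_ne_zero).const_mul _)
  have hm : IsLocalMin (fun t : ℝ => t * (A * P⁻¹).trace - n * Real.log t) 1 := by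
    filter_upwards [lt_mem_nhds (zero_lt_one : (0 : ℝ) < 1)] with t ht
    simpa using key t ht
  have h0 := hm.hasDerivAt_eq_zero hd
  rw [Matrix.trace_mul_comm]
  rw [inv_one] at h0
  linarith
end

section
/- Let n ≥ 1, let A and P be n×n real symmetric positive definite matrices, and set c = trace(P⁻¹·A)/n. Then D_LD(A,P) − D_LD(A, c·P) = n·(c − 1 − ln c); in particular D_LD(A, c·P) ≤ D_LD(A,P), with equality if and only if c = 1. -/
open Matrix

/-- with `c = trace(P⁻¹·A)/n`,
`D_LD(A,P) − D_LD(A, c·P) = n·(c − 1 − ln c)`; in particular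
`D_LD(A, c·P) ≤ D_LD(A,P)`, with equality iff `c = 1`. -/
theorem stmt_18 (n : ℕ) (hn : 1 ≤ n) (A P : Matrix (Fin n) (Fin n) ℝ)
    (hA : A.PosDef) (hP : P.PosDef)
    (c : ℝ) (hc : c = (P⁻¹ * A).trace / n) :
    DLD A P - DLD A (c • P) = n * (c - 1 - Real.log c) ∧
    DLD A (c • P) ≤ DLD A P ∧
    (DLD A (c • P) = DLD A P ↔ c = 1) := by
  have hn0 : (0 : ℝ) < n := by exact_mod_cast hn
  haveI : Nonempty (Fin n) := ⟨⟨0, hn⟩⟩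
  have htr : 0 < (P⁻¹ * A).trace := by
    obtain ⟨B, hB⟩ : ∃ B : Matrix (Fin n) (Fin n) ℝ, P⁻¹ = Bᴴ * B := by
      open scoped MatrixOrder in
      exact CStarAlgebra.nonneg_iff_eq_star_mul_self.mp hP.inv.posSemidef.nonneg
    have hd : 0 < (P⁻¹).det := hP.inv.det_pos
    have hBu : IsUnit B := by
      rw [Matrix.isUnit_iff_isUnit_det, isUnit_iff_ne_zero]
      intro h0
      rw [hB, det_mul, h0, mul_zero] at hd
      exact lt_irrefl _ hd
    have h := (hA.mul_mul_conjTranspose_same (B := B)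
      (Matrix.vecMul_injective_of_isUnit hBu)).trace_pos
    rwa [Matrix.trace_mul_comm, ← Matrix.mul_assoc, ← hB] at h
  have hc0 : 0 < c := by rw [hc]; positivity
  have htr2 : (A * P⁻¹).trace = n * c := by
    rw [Matrix.trace_mul_comm, hc]; field_simp
  have hdet : 0 < (A * P⁻¹).det := by
    rw [det_mul]; exact mul_pos hA.det_pos hP.inv.det_pos
  have hinv : (c • P)⁻¹ = c⁻¹ • P⁻¹ := by
    apply Matrix.inv_eq_left_inv
    rw [smul_mul_smul_comm, inv_mul_cancel₀ hc0.ne',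
      Matrix.nonsing_inv_mul _ hP.det_pos.ne'.isUnit, one_smul]
  have key : DLD A P - DLD A (c • P) = n * (c - 1 - Real.log c) := by
    unfold DLD
    rw [hinv, Matrix.mul_smul, trace_smul, det_smul, htr2, Fintype.card_fin,
      Real.log_mul (by positivity) hdet.ne', Real.log_pow, Real.log_inv, smul_eq_mul]
    field_simp
    ring
  refine ⟨key, ?_, ?_, ?_⟩
  · have := Real.log_le_sub_one_of_pos hc0
    have : 0 ≤ n * (c - 1 - Real.log c) := mul_nonneg hn0.le (by linarith)
    linarith
  · intro h
    by_contra hne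
    have := Real.log_lt_sub_one_of_pos hc0 hne
    have : 0 < n * (c - 1 - Real.log c) := mul_pos hn0 (by linarith)
    linarith
  · intro h
    rw [h, one_smul]
end

section
/- Let n ≥ 1, let A and P be n×n real symmetric positive definite matrices, and set c = trace(P⁻¹·A)/n. Then D_LD(A, c·P) = ln K((c·P)⁻¹·A) = ln K(P⁻¹·A). -/
open Matrix

open scoped MatrixOrder in
lemma exists_factor {n : ℕ} {M : Matrix (Fin n) (Fin n) ℝ} (hM : M.PosSemidef) :
    ∃ B : Matrix (Fin n) (Fin n) ℝ, M = Bᴴ * B :=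
  CStarAlgebra.nonneg_iff_eq_star_mul_self.mp hM.nonneg

/-- with `c = trace(P⁻¹·A)/n`,
`D_LD(A, c·P) = ln K((c·P)⁻¹·A) = ln K(P⁻¹·A)`. -/
theorem stmt_19 (n : ℕ) (hn : 1 ≤ n) (A P : Matrix (Fin n) (Fin n) ℝ)
    (hA : A.PosDef) (hP : P.PosDef)
    (c : ℝ) (hc : c = (P⁻¹ * A).trace / n) :
    DLD A (c • P) = Real.log (Kap ((c • P)⁻¹ * A)) ∧
    Real.log (Kap ((c • P)⁻¹ * A)) = Real.log (Kap (P⁻¹ * A)) := by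
  have hn0 : (n : ℝ) ≠ 0 := by
    have : n ≠ 0 := by omega
    exact_mod_cast this
  have : Nonempty (Fin n) := ⟨⟨0, by omega⟩⟩
  have htr : 0 < (P⁻¹ * A).trace := by
    obtain ⟨B, hB⟩ := exists_factor hP.inv.posSemidef
    have hdet : IsUnit B.det := by
      have h := hP.inv.det_pos
      rw [hB, Matrix.det_mul] at h
      exact isUnit_iff_ne_zero.mpr (right_ne_zero_of_mul h.ne')
    have hBu : IsUnit B := (Matrix.isUnit_iff_isUnit_det B).mpr hdet
    have hpd : (B * A * Bᴴ).PosDef :=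
      hA.mul_mul_conjTranspose_same (Matrix.vecMul_injective_of_isUnit hBu)
    have h := hpd.trace_pos
    rwa [Matrix.trace_mul_comm, ← Matrix.mul_assoc, ← hB] at h
  have hc0 : c ≠ 0 := by
    rw [hc]
    exact div_ne_zero htr.ne' hn0
  have hdP : IsUnit P.det := isUnit_iff_ne_zero.mpr hP.det_pos.ne'
  have hinv : (c • P)⁻¹ = c⁻¹ • P⁻¹ := by
    apply Matrix.inv_eq_left_inv
    rw [Matrix.smul_mul, Matrix.mul_smul, smul_smul, inv_mul_cancel₀ hc0, one_smul,
      Matrix.nonsing_inv_mul _ hdP]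
  have htc : (P⁻¹ * A).trace = c * n := by
    rw [hc]
    field_simp
  have hT : ((c • P)⁻¹ * A).trace = n := by
    rw [hinv, Matrix.smul_mul, Matrix.trace_smul, htc, smul_eq_mul]
    field_simp
  have hD : ((c • P)⁻¹ * A).det = (c ^ n)⁻¹ * (P⁻¹ * A).det := by
    rw [hinv, Matrix.smul_mul, Matrix.det_smul, Fintype.card_fin, inv_pow]
  constructor
  · unfold DLD Kap
    rw [Matrix.trace_mul_comm, Matrix.det_mul_comm, hT, div_self hn0, one_pow, one_div,
      Real.log_inv]
    ring
  · congr 1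
    unfold Kap
    rw [hT, hD, ← hc, div_self hn0, one_pow, one_div, mul_inv, inv_inv, div_eq_mul_inv]
end
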